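/- arXiv:1802.02724 — 3 statements merged into one kernel-verified Lean document; each statement's English description precedes it below -/
import Mathlib

section
/- Let X ⊆ ℝⁿ be convex, f₀, f₁, …, f_m : ℝⁿ → ℝ convex, and let x̄ be a random vector taking values in X such that f₀(x̄) and each f_i(x̄) are integrable. Let ε₁, ε₂ ≥ 0 and suppose that for every bounded nonnegative random vector z in ℝ^m (which may depend on x̄), E[Φ(x̄; x*, z)] ≤ ε₁ + ε₂ E‖z‖². Let x* ∈ X and z* ∈ ℝ^m with z* ≥ 0 componentwise satisfy Φ(x; x*, z*) ≥ 0 for all x ∈ X (as holds at any KKT point). Then E|f₀(x̄) − f₀(x*)| ≤ 2ε₁ + 9ε₂‖z*‖². -/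
open MeasureTheory RealInnerProductSpace Finset

/-! Test the hypothesis on the multiplier `z` that charges `2z*` to each violated constraint and
nothing to the others. Writing `p = (1/m) ∑ zᵢ* [fᵢ(x̄)]₊ ≥ 0` and `a = f₀(x̄) - f₀(x*)`, this gives
`Φ(x̄; x*, z) = a + 2p`, while `Φ(x̄; x*, z*) ≥ 0` gives `a + p ≥ 0`; together they yield
`|a| ≤ a + 2p`. Taking expectations and using `‖z‖² ≤ 4‖z*‖²` gives the bound `ε₁ + 4ε₂‖z*‖²`. -/

section ViolationMultiplier

variable {ι : Type*}

/-- The multiplier that charges the price `u i` to the constraint `y i ≤ 0` when it is violated and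
nothing otherwise, so that the Lagrangian term `∑ i, violationMultiplier u y i * y i` is the exact
penalty `∑ i, u i * [y i]₊`. -/
noncomputable def violationMultiplier (u y : ι → ℝ) (i : ι) : ℝ :=
  if 0 < y i then u i else 0

lemma violationMultiplier_nonneg {u : ι → ℝ} (hu : 0 ≤ u) (y : ι → ℝ) (i : ι) :
    0 ≤ violationMultiplier u y i :=
  ite_nonneg (hu i) le_rfl

lemma violationMultiplier_le {u : ι → ℝ} (hu : 0 ≤ u) (y : ι → ℝ) (i : ι) :
    violationMultiplier u y i ≤ u i :=
  ite_le_sup .. |>.trans (sup_le le_rfl (hu i))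

lemma violationMultiplier_mul_self (u y : ι → ℝ) (i : ι) :
    violationMultiplier u y i * y i = u i * max (y i) 0 := by
  unfold violationMultiplier
  split_ifs with hy
  · rw [max_eq_left hy.le]
  · rw [max_eq_right (not_lt.1 hy), zero_mul, mul_zero]

lemma measurable_violationMultiplier (u : ι → ℝ) : Measurable (violationMultiplier u) :=
  measurable_pi_lambda _ fun i =>
    Measurable.ite (measurableSet_lt measurable_const (measurable_pi_apply i))
      measurable_const measurable_const

variable [Fintype ι]

lemma abs_le_add_sum_violationMultiplier {a c : ℝ} {u : ι → ℝ} (hc : 0 ≤ c) (hu : 0 ≤ u)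
    (y : ι → ℝ) (ha : 0 ≤ a + c * ∑ i, u i * y i) :
    |a| ≤ a + c * ∑ i, violationMultiplier ((2 : ℝ) • u) y i * y i := by
  set p := c * ∑ i, u i * max (y i) 0
  have hp_nonneg : 0 ≤ p :=
    mul_nonneg hc (sum_nonneg fun i _ => mul_nonneg (hu i) (le_max_right _ _))
  have hle_p : c * ∑ i, u i * y i ≤ p :=
    mul_le_mul_of_nonneg_left
      (sum_le_sum fun i _ => mul_le_mul_of_nonneg_left (le_max_left _ _) (hu i)) hc
  have hpenalty : c * ∑ i, violationMultiplier ((2 : ℝ) • u) y i * y i = 2 * p := by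
    simp only [violationMultiplier_mul_self, Pi.smul_apply, smul_eq_mul, mul_assoc,
      ← mul_sum, p]
    ring
  rw [hpenalty]
  exact abs_le.2 ⟨by linarith, by linarith⟩

variable {Ω : Type*} [MeasurableSpace Ω] {P : Measure Ω}

lemma integrable_sum_violationMultiplier_mul {u : ι → ℝ} (hu : 0 ≤ u) {w g : Ω → ι → ℝ}
    (hw : Measurable w) (hg : ∀ i, Integrable (fun ω => g ω i) P) :
    Integrable (fun ω => ∑ i, violationMultiplier u (w ω) i * g ω i) P := by
  refine integrable_finsetSum _ fun i _ => (hg i).bdd_mul (c := u i) ?_ (.of_forall fun ω => ?_)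
  · exact ((measurable_pi_apply i).comp
      ((measurable_violationMultiplier u).comp hw)).aestronglyMeasurable
  · rw [Real.norm_of_nonneg (violationMultiplier_nonneg hu _ i)]
    exact violationMultiplier_le hu _ i

lemma integral_sum_violationMultiplier_sq_le [IsProbabilityMeasure P] {u : ι → ℝ} (hu : 0 ≤ u)
    (w : Ω → ι → ℝ) :
    ∫ ω, ∑ i, violationMultiplier u (w ω) i ^ 2 ∂P ≤ ∑ i, u i ^ 2 := by
  calc ∫ ω, ∑ i, violationMultiplier u (w ω) i ^ 2 ∂P
      ≤ ∫ _, ∑ i, u i ^ 2 ∂P :=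
        integral_mono_of_nonneg (.of_forall fun _ => sum_nonneg fun _ _ => sq_nonneg _)
          (integrable_const _) (.of_forall fun ω => sum_le_sum fun i _ =>
            pow_le_pow_left₀ (violationMultiplier_nonneg hu _ i) (violationMultiplier_le hu _ i) 2)
    _ = ∑ i, u i ^ 2 := by simp

end ViolationMultiplier

/-- Here `gap` stands for `f₀(x̄) - f₀(x*)`, `g` for `(f₁(x̄), …, f_m(x̄))` and `c` for `1/m`. -/
theorem statement1_general {ι : Type*} [Fintype ι] {Ω : Type*} [MeasurableSpace Ω]
    (P : Measure Ω) [IsProbabilityMeasure P] {gap : Ω → ℝ} {g : Ω → ι → ℝ}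
    (hgap : Integrable gap P) (hg : ∀ i, Integrable (fun ω => g ω i) P)
    {c ε₁ ε₂ : ℝ} (hc : 0 ≤ c) (hε₂ : 0 ≤ ε₂) {zs : ι → ℝ} (hzs : 0 ≤ zs)
    (hopt : ∀ᵐ ω ∂P, 0 ≤ gap ω + c * ∑ i, zs i * g ω i)
    (hbound : ∀ z : Ω → ι → ℝ, Measurable z → (∀ ω i, 0 ≤ z ω i) → (∃ B, ∀ ω i, z ω i ≤ B) →
      ∫ ω, (gap ω + c * ∑ i, z ω i * g ω i) ∂P ≤ ε₁ + ε₂ * ∫ ω, ∑ i, z ω i ^ 2 ∂P) :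
    ∫ ω, |gap ω| ∂P ≤ ε₁ + 4 * ε₂ * ∑ i, zs i ^ 2 := by
  -- `hbound` only admits measurable `z`, so `z` is built from a measurable version `w` of `g`.
  obtain ⟨w, hw, hgw⟩ : AEMeasurable g P := aemeasurable_pi_lambda g fun i => (hg i).aemeasurable
  have hu : 0 ≤ (2 : ℝ) • zs := smul_nonneg zero_le_two hzs
  let z : Ω → ι → ℝ := fun ω => violationMultiplier ((2 : ℝ) • zs) (w ω)
  have hz_bdd : ∃ B, ∀ ω i, z ω i ≤ B :=
    ⟨‖(2 : ℝ) • zs‖, fun _ i => (violationMultiplier_le hu _ i).trans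
      ((Real.le_norm_self _).trans (norm_le_pi_norm _ i))⟩
  have habs_le : ∀ᵐ ω ∂P, |gap ω| ≤ gap ω + c * ∑ i, z ω i * g ω i := by
    filter_upwards [hopt, hgw] with ω hω hgwω
    simpa only [z, ← hgwω] using abs_le_add_sum_violationMultiplier hc hzs (g ω) hω
  calc ∫ ω, |gap ω| ∂P
      ≤ ∫ ω, (gap ω + c * ∑ i, z ω i * g ω i) ∂P :=
        integral_mono_ae hgap.abs
          (hgap.add ((integrable_sum_violationMultiplier_mul hu hw hg).const_mul c)) habs_le
    _ ≤ ε₁ + ε₂ * ∫ ω, ∑ i, z ω i ^ 2 ∂P :=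
        hbound z ((measurable_violationMultiplier _).comp hw)
          (fun _ => violationMultiplier_nonneg hu _) hz_bdd
    _ ≤ ε₁ + ε₂ * ∑ i, ((2 : ℝ) • zs) i ^ 2 := by
        gcongr
        exact integral_sum_violationMultiplier_sq_le hu w
    _ = ε₁ + 4 * ε₂ * ∑ i, zs i ^ 2 := by
        simp only [Pi.smul_apply, smul_eq_mul, mul_pow, ← mul_sum]
        ring

/-- if `E[Φ(x̄; x*, z)] ≤ ε₁ + ε₂ E‖z‖²` for every bounded nonnegative
random vector `z`, and `(x*, z*)` satisfies `Φ(x; x*, z*) ≥ 0` on `X` (as at a KKT point),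
then `E|f₀(x̄) − f₀(x*)| ≤ 2ε₁ + 9ε₂‖z*‖²`. -/
theorem statement1 {n m : ℕ} (hm : 0 < m)
    {Ω : Type*} [MeasurableSpace Ω] (P : Measure Ω) [IsProbabilityMeasure P]
    (X : Set (EuclideanSpace ℝ (Fin n))) (hX : Convex ℝ X)
    (f0 : EuclideanSpace ℝ (Fin n) → ℝ) (f : Fin m → EuclideanSpace ℝ (Fin n) → ℝ)
    (hf0 : ConvexOn ℝ Set.univ f0) (hf : ∀ i, ConvexOn ℝ Set.univ (f i))
    (xbar : Ω → EuclideanSpace ℝ (Fin n)) (hxbarX : ∀ ω, xbar ω ∈ X)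
    (hxbar_meas : Measurable xbar)
    (hint0 : Integrable (fun ω => f0 (xbar ω)) P)
    (hint : ∀ i, Integrable (fun ω => f i (xbar ω)) P)
    (ε₁ ε₂ : ℝ) (hε₁ : 0 ≤ ε₁) (hε₂ : 0 ≤ ε₂)
    (xs : EuclideanSpace ℝ (Fin n)) (hxsX : xs ∈ X)
    (zs : Fin m → ℝ) (hzs : ∀ i, 0 ≤ zs i)
    (hopt : ∀ x ∈ X, 0 ≤ f0 x - f0 xs + (m : ℝ)⁻¹ * ∑ i, zs i * f i x)
    (hbound : ∀ z : Ω → Fin m → ℝ, Measurable z → (∀ ω i, 0 ≤ z ω i) →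
      (∃ B, ∀ ω i, z ω i ≤ B) →
      (∫ ω, (f0 (xbar ω) - f0 xs + (m : ℝ)⁻¹ * ∑ i, z ω i * f i (xbar ω)) ∂P)
        ≤ ε₁ + ε₂ * ∫ ω, ∑ i, z ω i ^ 2 ∂P) :
    (∫ ω, |f0 (xbar ω) - f0 xs| ∂P) ≤ 2 * ε₁ + 9 * ε₂ * ∑ i, zs i ^ 2 :=
  (statement1_general P (hint0.sub (integrable_const _)) hint (by positivity) hε₂ hzs
    (.of_forall fun ω => hopt _ (hxbarX ω)) hbound).trans (by gcongr <;> linarith)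
end

section
/- Let β > 0, ρ > 0, x⁺ ∈ ℝⁿ, z^k ∈ ℝ^m, and z ∈ ℝ^m with z ≥ 0 componentwise. For each i ∈ [m] let z^{(i)} ∈ ℝ^m be the vector that agrees with z^k in all coordinates except that its i-th coordinate equals z^k_i + ρ·max(−z^k_i/β, f_i(x⁺)). Then −Ψ_β(x⁺, z^k) + (1/m) Σ_{i=1}^m z_i f_i(x⁺) + (1/(2ρ)) · (1/m) Σ_{i=1}^m (‖z^{(i)} − z‖² − ‖z^k − z‖²) ≤ (1/(2ρ) − β/(2ρ²)) · (1/m) Σ_{i=1}^m ‖z^{(i)} − z^k‖². (This is Lemma 3.2 of the paper, with the conditional expectation over a uniformly random index j_k ∈ [m] written out as an average over i ∈ [m].) -/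
open RealInnerProductSpace Finset

/-- The function `ψ_β(u, v)` from the augmented Lagrangian. -/
noncomputable def psi (β u v : ℝ) : ℝ :=
  if 0 ≤ β * u + v then u * v + β / 2 * u ^ 2 else -v ^ 2 / (2 * β)

/-!
Both branches of `ψ_β(u, v)` equal `d v + (β/2) d²`, where `d = max (-v/β) u` is the direction of
the multiplier update. With this formula the inequality for a single coordinate becomes an identity
with the slack `z (d - u)`, which is nonnegative since `0 ≤ z` and `u ≤ d`. Updating the `i`-th
coordinate changes only the `i`-th term of each squared distance, so averaging the coordinate
inequalities over `i` gives the theorem.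
-/

/-- The direction `∂ψ_β/∂v (u, v)` in which a multiplier `v` is updated when its constraint has
value `u`. -/
noncomputable def dualDirection (β u v : ℝ) : ℝ := max (-v / β) u

theorem le_dualDirection (β u v : ℝ) : u ≤ dualDirection β u v := le_max_right _ _

theorem psi_eq_dualDirection {β : ℝ} (hβ : 0 < β) (u v : ℝ) :
    psi β u v = dualDirection β u v * v + β / 2 * dualDirection β u v ^ 2 := by
  unfold psi dualDirection
  split_ifs with h
  · have hu : -v / β ≤ u := by rw [div_le_iff₀ hβ]; linarith
    rw [max_eq_right hu]
  · have hu : u ≤ -v / β := by rw [le_div_iff₀ hβ]; linarith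
    rw [max_eq_left hu]
    field_simp
    ring

theorem neg_psi_add_mul_add_sq_sub_sq_eq {β ρ : ℝ} (hβ : 0 < β) (hρ : ρ ≠ 0) (u v z : ℝ) :
    -psi β u v + z * u
        + 1 / (2 * ρ) * ((v + ρ * dualDirection β u v - z) ^ 2 - (v - z) ^ 2)
      = (1 / (2 * ρ) - β / (2 * ρ ^ 2)) * (ρ * dualDirection β u v) ^ 2
        - z * (dualDirection β u v - u) := by
  rw [psi_eq_dualDirection hβ]
  field_simp
  ring

section Update

variable {ι : Type*} [Fintype ι] [DecidableEq ι]

theorem sum_apply_update_sub_sum {α : ι → Type*} {M : Type*} [AddCommGroup M]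
    (g : ∀ j, α j → M) (v : ∀ j, α j) (i : ι) (a : α i) :
    ∑ j, g j (Function.update v i a j) - ∑ j, g j (v j) = g i a - g i (v i) := by
  rw [← sum_sub_distrib, Fintype.sum_eq_single i, Function.update_self]
  intro j hj
  rw [Function.update_of_ne hj, sub_self]

theorem sum_update_sub_self_sq {R : Type*} [Ring R] (v : ι → R) (i : ι) (a : R) :
    ∑ j, (Function.update v i a j - v j) ^ 2 = (a - v i) ^ 2 := by
  rw [Fintype.sum_eq_single i, Function.update_self]
  intro j hj
  rw [Function.update_of_ne hj, sub_self, zero_pow two_ne_zero]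

theorem neg_psi_add_mul_add_sum_update_le {β ρ : ℝ} (hβ : 0 < β) (hρ : ρ ≠ 0) (u v z : ι → ℝ)
    {i : ι} (hz : 0 ≤ z i) {w : ι → ℝ}
    (hw : w = Function.update v i (v i + ρ * dualDirection β (u i) (v i))) :
    -psi β (u i) (v i) + z i * u i
        + 1 / (2 * ρ) * (∑ j, (w j - z j) ^ 2 - ∑ j, (v j - z j) ^ 2)
      ≤ (1 / (2 * ρ) - β / (2 * ρ ^ 2)) * ∑ j, (w j - v j) ^ 2 := by
  have slack_nonneg : 0 ≤ z i * (dualDirection β (u i) (v i) - u i) :=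
    mul_nonneg hz (sub_nonneg.2 (le_dualDirection _ _ _))
  rw [hw, sum_apply_update_sub_sum (fun j x ↦ (x - z j) ^ 2), sum_update_sub_self_sq,
    add_sub_cancel_left, neg_psi_add_mul_add_sq_sub_sq_eq hβ hρ]
  exact sub_le_self _ slack_nonneg

theorem statement3_general {β ρ : ℝ} (hβ : 0 < β) (hρ : ρ ≠ 0) (u v z : ι → ℝ)
    (hz : ∀ i, 0 ≤ z i) (w : ι → ι → ℝ)
    (hw : ∀ i, w i = Function.update v i (v i + ρ * max (-v i / β) (u i))) :
    -((Fintype.card ι : ℝ)⁻¹ * ∑ i, psi β (u i) (v i)) + (Fintype.card ι : ℝ)⁻¹ * ∑ i, z i * u i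
        + 1 / (2 * ρ) * ((Fintype.card ι : ℝ)⁻¹ *
          ∑ i, ((∑ j, (w i j - z j) ^ 2) - ∑ j, (v j - z j) ^ 2))
      ≤ (1 / (2 * ρ) - β / (2 * ρ ^ 2)) *
          ((Fintype.card ι : ℝ)⁻¹ * ∑ i, ∑ j, (w i j - v j) ^ 2) := by
  have sum_le := sum_le_sum fun i (_ : i ∈ univ) ↦
    neg_psi_add_mul_add_sum_update_le hβ hρ u v z (hz i) (hw i)
  simp only [sum_add_distrib, sum_neg_distrib, ← mul_sum] at sum_le
  have average_le := mul_le_mul_of_nonneg_left sum_le (inv_nonneg.2 (Fintype.card ι).cast_nonneg)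
  linarith

end Update

/-- Lemma 3.2 of the paper, with the conditional expectation over the
uniformly random index written out as an average over `i ∈ [m]`. -/
theorem statement3 {n m : ℕ} (hm : 0 < m)
    (f : Fin m → EuclideanSpace ℝ (Fin n) → ℝ) (hf : ∀ i, ConvexOn ℝ Set.univ (f i))
    (β ρ : ℝ) (hβ : 0 < β) (hρ : 0 < ρ)
    (xp : EuclideanSpace ℝ (Fin n)) (zk z : Fin m → ℝ) (hz : ∀ i, 0 ≤ z i)
    (zi : Fin m → Fin m → ℝ)
    (hzi : ∀ i j, zi i j =
      if j = i then zk j + ρ * max (-(zk j) / β) (f j xp) else zk j) :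
    -((m : ℝ)⁻¹ * ∑ i, psi β (f i xp) (zk i)) + (m : ℝ)⁻¹ * ∑ i, z i * f i xp
        + 1 / (2 * ρ) * ((m : ℝ)⁻¹ * ∑ i, ((∑ j, (zi i j - z j) ^ 2) - ∑ j, (zk j - z j) ^ 2))
      ≤ (1 / (2 * ρ) - β / (2 * ρ ^ 2)) * ((m : ℝ)⁻¹ * ∑ i, ∑ j, (zi i j - zk j) ^ 2) := by
  have zi_eq_update (i : Fin m) :
      zi i = Function.update zk i (zk i + ρ * max (-zk i / β) (f i xp)) := by
    ext j
    by_cases hji : j = i <;> simp [hzi, hji]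
  simpa only [Fintype.card_fin] using
    statement3_general hβ hρ.ne' (fun i ↦ f i xp) zk z hz zi zi_eq_update
end

section
/- Let β > 0. For each fixed v ∈ ℝ, the function u ↦ ψ_β(u, v) is convex on ℝ and differentiable everywhere with derivative u ↦ [βu + v]_+ = max(βu + v, 0). For each fixed u ∈ ℝ, the function v ↦ ψ_β(u, v) is concave on ℝ and differentiable everywhere with derivative v ↦ max(−v/β, u). -/
/-!
Completing the square merges the two branches into
`ψ_β(u, v) = ([βu + v]₊² - v²) / (2β)`. The function `t ↦ [t]₊²` has derivative `2[t]₊`, including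
at the kink `t = 0`, so both partial derivatives follow from the chain rule. They are monotone
in `u` and antitone in `v`, which gives convexity and concavity.
-/

theorem hasDerivAt_max_zero_pow {n : ℕ} (hn : 1 < n) (x : ℝ) :
    HasDerivAt (fun y : ℝ => max y 0 ^ n) (n * max x 0 ^ (n - 1)) x := by
  -- Both the function and the candidate derivative are continuous at `0`, so it is enough to
  -- differentiate away from `0`.
  refine hasDerivAt_of_hasDerivAt_of_ne' (f := fun y : ℝ => max y 0 ^ n)
    (g := fun y => n * max y 0 ^ (n - 1)) (x := 0) (fun y hy => ?_) (by fun_prop) (by fun_prop) x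
  rcases hy.lt_or_gt with hneg | hpos
  · have hzero : (fun z : ℝ => max z 0 ^ n) =ᶠ[nhds y] fun _ => 0 := by
      filter_upwards [eventually_lt_nhds hneg] with z hz
      rw [max_eq_right hz.le, zero_pow (by lia)]
    rw [max_eq_right hneg.le, zero_pow (by lia), mul_zero]
    exact (hasDerivAt_const y 0).congr_of_eventuallyEq hzero
  · have hpow : (fun z : ℝ => max z 0 ^ n) =ᶠ[nhds y] fun z => z ^ n := by
      filter_upwards [eventually_gt_nhds hpos] with z hz
      rw [max_eq_left hz.le]
    rw [max_eq_left hpos.le]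
    exact (hasDerivAt_pow n y).congr_of_eventuallyEq hpow

theorem convexOn_univ_of_hasDerivAt_of_monotone {f f' : ℝ → ℝ}
    (hf : ∀ x, HasDerivAt f (f' x) x) (hf' : Monotone f') : ConvexOn ℝ Set.univ f :=
  Monotone.convexOn_univ_of_deriv (fun x => (hf x).differentiableAt) (by rwa [deriv_eq hf])

theorem concaveOn_univ_of_hasDerivAt_of_antitone {f f' : ℝ → ℝ}
    (hf : ∀ x, HasDerivAt f (f' x) x) (hf' : Antitone f') : ConcaveOn ℝ Set.univ f :=
  Antitone.concaveOn_univ_of_deriv (fun x => (hf x).differentiableAt) (by rwa [deriv_eq hf])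

section psi

variable {β : ℝ}

theorem psi_eq_max_sq_sub_sq_div (hβ : β ≠ 0) (u v : ℝ) :
    psi β u v = (max (β * u + v) 0 ^ 2 - v ^ 2) / (2 * β) := by
  unfold psi
  split_ifs with h
  · rw [max_eq_left h]
    field_simp
    ring
  · rw [max_eq_right (not_le.mp h).le]
    ring

theorem hasDerivAt_psi_left (hβ : β ≠ 0) (u v : ℝ) :
    HasDerivAt (fun u => psi β u v) (max (β * u + v) 0) u := by
  simp only [psi_eq_max_sq_sub_sq_div hβ]
  have haffine : HasDerivAt (fun u => β * u + v) β u := by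
    simpa using ((hasDerivAt_id u).const_mul β).add_const v
  have hsq := (hasDerivAt_max_zero_pow one_lt_two (β * u + v)).comp u haffine
  refine ((hsq.sub_const (v ^ 2)).div_const (2 * β)).congr_deriv ?_
  field_simp
  simp

theorem max_mul_add_zero_sub_div (hβ : 0 < β) (u v : ℝ) :
    (max (β * u + v) 0 - v) / β = max (-v / β) u := by
  rw [← max_sub_sub_right, add_sub_cancel_right, zero_sub, ← max_div_div_right hβ.le,
    mul_div_cancel_left₀ u hβ.ne', max_comm]

theorem hasDerivAt_psi_right (hβ : 0 < β) (u v : ℝ) :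
    HasDerivAt (fun v => psi β u v) (max (-v / β) u) v := by
  simp only [psi_eq_max_sq_sub_sq_div hβ.ne']
  have hsq := (hasDerivAt_max_zero_pow one_lt_two (β * u + v)).comp v
    ((hasDerivAt_id v).const_add (β * u))
  refine ((hsq.sub (hasDerivAt_pow 2 v)).div_const (2 * β)).congr_deriv ?_
  rw [← max_mul_add_zero_sub_div hβ]
  field_simp
  simp

theorem convexOn_psi_left (hβ : 0 < β) (v : ℝ) : ConvexOn ℝ Set.univ (fun u => psi β u v) :=
  convexOn_univ_of_hasDerivAt_of_monotone (fun u => hasDerivAt_psi_left hβ.ne' u v)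
    fun _ _ _ => by gcongr

theorem concaveOn_psi_right (hβ : 0 < β) (u : ℝ) : ConcaveOn ℝ Set.univ (fun v => psi β u v) :=
  concaveOn_univ_of_hasDerivAt_of_antitone (fun v => hasDerivAt_psi_right hβ u v)
    fun _ _ _ => by gcongr

end psi

/-- for fixed `v`, `u ↦ ψ_β(u, v)` is convex and differentiable with
derivative `[βu + v]₊`; for fixed `u`, `v ↦ ψ_β(u, v)` is concave and differentiable
with derivative `max(−v/β, u)`. -/
theorem statement7 (β : ℝ) (hβ : 0 < β) :
    (∀ v : ℝ, ConvexOn ℝ Set.univ (fun u => psi β u v) ∧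
      ∀ u : ℝ, HasDerivAt (fun u => psi β u v) (max (β * u + v) 0) u) ∧
    (∀ u : ℝ, ConcaveOn ℝ Set.univ (fun v => psi β u v) ∧
      ∀ v : ℝ, HasDerivAt (fun v => psi β u v) (max (-v / β) u) v) :=
  ⟨fun v => ⟨convexOn_psi_left hβ v, fun u => hasDerivAt_psi_left hβ.ne' u v⟩,
    fun u => ⟨concaveOn_psi_right hβ u, fun v => hasDerivAt_psi_right hβ u v⟩⟩
end
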